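/- arXiv:math-ph/0702002 — 5 statements merged into one kernel-verified Lean document; each statement's English description precedes it below -/
import Mathlib

section
/- A probability distribution p on Ω = Ω₁ × ⋯ × Ω_N satisfies I(p) = ∑_{i=1}^{N−1} ln n_i if and only if there exist a probability distribution q on Ω_N and surjective maps π_i : Ω_N → Ω_i (i = 1,…,N−1) with q({ω_N ∈ Ω_N : π_i(ω_N) = ω_i}) = 1/n_i for every ω_i ∈ Ω_i, such that p(ω₁,…,ω_N) = q(ω_N) whenever ω_i = π_i(ω_N) for all i = 1,…,N−1, and p(ω₁,…,ω_N) = 0 otherwise. -/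
/-!
Split `I(p) = ∑_{i<N} H(p_i) - (H(p) - H(p_N))`, where `p_N` is the marginal of the last unit.
Each `H(p_i)` is at most `ln n_i`, with equality only for the uniform distribution
(`entropy_le_log_card`, `eq_uniform_of_entropy_eq`), and `H(p) ≥ H(p_N)`, with equality only if
every `p ω` is `0` or equals `p_N (ω_N)` (`entropy_marginal_le`, `eq_of_entropy_marginal_eq`).
So `I(p) = ∑_{i<N} ln n_i` forces all these equalities at once. In that case each value `y` with
`p_N y > 0` has exactly one extension `s y` of positive mass, so `p` is supported on the image of a
section `s` of the last coordinate, and the maps `π_i` are its components; they are onto because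
the uniform `p_i` charges every point. Conversely, for `p` supported on the image of a section,
sums over the product collapse to sums over the last factor (`sum_section`), which gives
`H(p) = H(p_N)` and the uniform marginals.
-/

open Finset

/-- A probability distribution on a finite set: nonnegative and summing to 1. -/
def IsProbDist {α : Type*} [Fintype α] (p : α → ℝ) : Prop :=
  (∀ a, 0 ≤ p a) ∧ ∑ a, p a = 1

/-- Shannon entropy (with `0 * log 0 = 0`, automatic since `Real.log 0 = 0`). -/
noncomputable def entropy {α : Type*} [Fintype α] (p : α → ℝ) : ℝ :=
  - ∑ a, p a * Real.log (p a)

/-- The `i`-th marginal of a distribution on a finite product. -/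
noncomputable def marginal {m : ℕ} {Ω : Fin m → Type*} [∀ i, Fintype (Ω i)]
    [∀ i, DecidableEq (Ω i)] (p : (∀ i, Ω i) → ℝ) (i : Fin m) : Ω i → ℝ :=
  fun x => ∑ ω : ∀ j, Ω j, if ω i = x then p ω else 0

/-- Multi-information `I(p) = ∑ H(p_i) − H(p)`. -/
noncomputable def multiInfo {m : ℕ} {Ω : Fin m → Type*} [∀ i, Fintype (Ω i)]
    [∀ i, DecidableEq (Ω i)] (p : (∀ i, Ω i) → ℝ) : ℝ :=
  (∑ i, entropy (marginal p i)) - entropy p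

/-- The nonnegative summand of the relative entropy of a distribution to the uniform one on `n`
points (with the linear correction `1 / n - t`, which sums to zero). -/
lemma gibbs_term_nonneg {n t : ℝ} (hn : 0 < n) (ht : 0 ≤ t) :
    0 ≤ 1 / n - t + t * (Real.log n + Real.log t) := by
  rcases ht.eq_or_lt with rfl | ht
  · simp [hn.le]
  · have h := Real.log_le_sub_one_of_pos (inv_pos.2 (mul_pos hn ht))
    rw [Real.log_inv, Real.log_mul hn.ne' ht.ne'] at h
    have h2 := mul_le_mul_of_nonneg_left h ht.le
    have h3 : t * ((n * t)⁻¹ - 1) = 1 / n - t := by field_simp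
    linarith

lemma eq_of_gibbs_term_eq_zero {n t : ℝ} (hn : 0 < n) (ht : 0 ≤ t)
    (h0 : 1 / n - t + t * (Real.log n + Real.log t) = 0) : t = 1 / n := by
  rcases ht.eq_or_lt with rfl | ht
  · simp at h0
    exact absurd h0 hn.ne'
  · by_contra hne
    have hne' : (n * t)⁻¹ ≠ 1 := by
      intro h
      rw [inv_eq_one] at h
      exact hne (by rw [eq_div_iff hn.ne']; linarith)
    have h := Real.log_lt_sub_one_of_pos (inv_pos.2 (mul_pos hn ht)) hne'
    rw [Real.log_inv, Real.log_mul hn.ne' ht.ne'] at h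
    have h2 := mul_lt_mul_of_pos_left h ht
    have h3 : t * ((n * t)⁻¹ - 1) = 1 / n - t := by field_simp
    linarith

lemma sum_gibbs_term {α : Type*} [Fintype α] {r : α → ℝ} (hr : IsProbDist r)
    (hn : (0 : ℝ) < Fintype.card α) :
    ∑ a, (1 / (Fintype.card α : ℝ) - r a
        + r a * (Real.log (Fintype.card α) + Real.log (r a)))
      = Real.log (Fintype.card α) - entropy r := by
  simp only [mul_add, sum_add_distrib, sum_sub_distrib, ← sum_mul, hr.2, entropy]
  simp [hn.ne']

lemma entropy_le_log_card {α : Type*} [Fintype α] {r : α → ℝ} (hr : IsProbDist r)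
    (hn : (0 : ℝ) < Fintype.card α) : entropy r ≤ Real.log (Fintype.card α) := by
  have h := sum_gibbs_term hr hn
  have h2 := sum_nonneg fun a (_ : a ∈ univ) => gibbs_term_nonneg hn (hr.1 a)
  linarith

lemma eq_uniform_of_entropy_eq {α : Type*} [Fintype α] {r : α → ℝ} (hr : IsProbDist r)
    (hn : (0 : ℝ) < Fintype.card α) (h : entropy r = Real.log (Fintype.card α)) (a : α) :
    r a = 1 / (Fintype.card α : ℝ) := by
  have hs := sum_gibbs_term hr hn
  rw [h, sub_self, sum_eq_zero_iff_of_nonneg fun a _ => gibbs_term_nonneg hn (hr.1 a)] at hs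
  exact eq_of_gibbs_term_eq_zero hn (hr.1 a) (hs a (mem_univ a))

lemma entropy_uniform {α : Type*} [Fintype α] {r : α → ℝ}
    (hn : (0 : ℝ) < Fintype.card α) (h : ∀ a, r a = 1 / (Fintype.card α : ℝ)) :
    entropy r = Real.log (Fintype.card α) := by
  simp [entropy, h, hn.ne']

lemma sum_section {m : ℕ} {Ω : Fin m → Type*} [∀ i, Fintype (Ω i)] {i : Fin m} {s : Ω i → ∀ j, Ω j}
    (hs : ∀ y, s y i = y) {F : (∀ j, Ω j) → ℝ} (hF : ∀ ω, ω ≠ s (ω i) → F ω = 0) :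
    ∑ ω, F ω = ∑ y, F (s y) := by
  symm
  refine Fintype.sum_of_injective s (fun a b hab => ?_) _ _ (fun ω hω => hF ω ?_) fun _ => rfl
  · rw [← hs a, hab, hs]
  · exact fun h => hω ⟨_, h.symm⟩

section Marginals

variable {m : ℕ} {Ω : Fin m → Type*} [∀ i, Fintype (Ω i)] [∀ i, DecidableEq (Ω i)]
  {p : (∀ i, Ω i) → ℝ}

lemma sum_marginal_mul (i : Fin m) (f : Ω i → ℝ) :
    ∑ x, marginal p i x * f x = ∑ ω, p ω * f (ω i) := by
  simp only [marginal, sum_mul]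
  rw [sum_comm]
  simp [ite_mul]

lemma isProbDist_marginal (hp : IsProbDist p) (i : Fin m) : IsProbDist (marginal p i) := by
  refine ⟨fun x => sum_nonneg fun ω _ => ?_, ?_⟩
  · split_ifs
    exacts [hp.1 ω, le_rfl]
  · simpa [hp.2] using sum_marginal_mul (p := p) i (fun _ => 1)

lemma le_marginal (hp : IsProbDist p) (i : Fin m) (ω : ∀ i, Ω i) : p ω ≤ marginal p i (ω i) := by
  have h := single_le_sum (f := fun ω' : ∀ i, Ω i => if ω' i = ω i then p ω' else 0)
    (fun ω' _ => by
      split_ifs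
      exacts [hp.1 ω', le_rfl]) (mem_univ ω)
  simpa [marginal] using h

/-- The conditional entropy `H(p) - H(p_i)` as an explicit sum. -/
lemma entropy_sub_entropy_marginal (i : Fin m) :
    entropy p - entropy (marginal p i)
      = ∑ ω, p ω * (Real.log (marginal p i (ω i)) - Real.log (p ω)) := by
  simp only [entropy, mul_sub, sum_sub_distrib,
    sum_marginal_mul i (fun x => Real.log (marginal p i x))]
  ring

lemma condEntropy_term_nonneg (hp : IsProbDist p) (i : Fin m) (ω : ∀ i, Ω i) :
    0 ≤ p ω * (Real.log (marginal p i (ω i)) - Real.log (p ω)) := by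
  rcases (hp.1 ω).eq_or_lt with h | h
  · simp [← h]
  · exact mul_nonneg h.le (sub_nonneg.2 (Real.log_le_log h (le_marginal hp i ω)))

lemma entropy_marginal_le (hp : IsProbDist p) (i : Fin m) :
    entropy (marginal p i) ≤ entropy p := by
  have h := entropy_sub_entropy_marginal (p := p) i
  have h2 := sum_nonneg fun ω (_ : ω ∈ univ) => condEntropy_term_nonneg hp i ω
  linarith

lemma eq_of_entropy_marginal_eq (hp : IsProbDist p) (i : Fin m)
    (h : entropy (marginal p i) = entropy p) (ω : ∀ i, Ω i) (hω : p ω ≠ 0) :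
    p ω = marginal p i (ω i) := by
  have hs := entropy_sub_entropy_marginal (p := p) i
  rw [h, sub_self, eq_comm,
    sum_eq_zero_iff_of_nonneg fun ω _ => condEntropy_term_nonneg hp i ω] at hs
  have hpos : 0 < p ω := (hp.1 ω).lt_of_ne' hω
  have h0 := (mul_eq_zero.1 (hs ω (mem_univ ω))).resolve_left hω
  exact (Real.log_injOn_pos (hpos.trans_le (le_marginal hp i ω)) hpos (sub_eq_zero.1 h0)).symm

/-- A distribution whose `i`-th marginal carries all of its entropy has, for each value `y` of the
`i`-th coordinate, at most one point of positive mass above `y`, and that point has mass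
`marginal p i y`; hence it lives on a section `s` of the `i`-th coordinate. -/
lemma exists_section [∀ i, Nonempty (Ω i)] (hp : IsProbDist p) (i : Fin m)
    (h : entropy (marginal p i) = entropy p) :
    ∃ s : Ω i → ∀ j, Ω j, (∀ y, s y i = y) ∧
      (∀ y, p (s y) = marginal p i y) ∧ ∀ ω, ω ≠ s (ω i) → p ω = 0 := by
  have hex : ∀ y, ∃ ω : ∀ j, Ω j, ω i = y ∧ p ω = marginal p i y := by
    intro y
    by_cases hy : marginal p i y = 0
    · let ω : ∀ j, Ω j := Function.update (fun j => Classical.arbitrary (Ω j)) i y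
      have hω : ω i = y := by simp [ω]
      refine ⟨ω, hω, le_antisymm ?_ ?_⟩
      · simpa [hω] using le_marginal hp i ω
      · rw [hy]
        exact hp.1 ω
    · obtain ⟨ω, -, hω⟩ := exists_ne_zero_of_sum_ne_zero hy
      rw [ite_ne_right_iff] at hω
      obtain ⟨rfl, hω⟩ := hω
      exact ⟨ω, rfl, eq_of_entropy_marginal_eq hp i h ω hω⟩
  choose s hs hps using hex
  refine ⟨s, hs, hps, fun ω hω => ?_⟩
  by_contra hne
  have hq := eq_of_entropy_marginal_eq hp i h ω hne
  -- Two distinct points of full mass above `ω i` would give `2 p_i(ω i) ≤ p_i(ω i)`.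
  have hsub := sum_le_sum_of_subset_of_nonneg
    (f := fun ω' : ∀ i, Ω i => if ω' i = ω i then p ω' else 0)
    (subset_univ {ω, s (ω i)}) (fun ω' _ _ => by
      split_ifs
      exacts [hp.1 ω', le_rfl])
  rw [sum_pair hω] at hsub
  simp only [hs, if_true, hps] at hsub
  change p ω + marginal p i (ω i) ≤ marginal p i (ω i) at hsub
  exact hne (le_antisymm (by linarith) (hp.1 ω))

lemma marginal_section {i : Fin m} {s : Ω i → ∀ j, Ω j} (hs : ∀ y, s y i = y)
    (hp0 : ∀ ω, ω ≠ s (ω i) → p ω = 0) (j : Fin m) (x : Ω j) :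
    marginal p j x = ∑ y, if s y j = x then p (s y) else 0 :=
  sum_section hs fun ω hω => by simp [hp0 ω hω]

end Marginals

/-- A probability distribution `p` on `Ω₁ × ⋯ × Ω_N` (with `N+1` units indexed by
`Fin (N+1)`, the last unit being `Fin.last N`) achieves
`I(p) = ∑_{i=1}^{N−1} ln n_i` iff there is a distribution `q` on `Ω_N` and surjections
`π_i : Ω_N → Ω_i` with `q {π_i = ω_i} = 1/n_i`, with `p` concentrated on the graph. -/
theorem stmt1 {N : ℕ} (hN : 1 ≤ N) (Ω : Fin (N + 1) → Type*) [∀ i, Fintype (Ω i)]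
    [∀ i, DecidableEq (Ω i)]
    (hcard : ∀ i, 2 ≤ Fintype.card (Ω i))
    (hmono : ∀ i j : Fin (N + 1), i ≤ j → Fintype.card (Ω i) ≤ Fintype.card (Ω j))
    (p : (∀ i, Ω i) → ℝ) (hp : IsProbDist p) :
    multiInfo p = ∑ i : Fin N, Real.log (Fintype.card (Ω i.castSucc)) ↔
      ∃ (q : Ω (Fin.last N) → ℝ) (π : ∀ i : Fin N, Ω (Fin.last N) → Ω i.castSucc),
        IsProbDist q ∧
        (∀ i, Function.Surjective (π i)) ∧
        (∀ (i : Fin N) (x : Ω i.castSucc),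
          (∑ ωN : Ω (Fin.last N), if π i ωN = x then q ωN else 0)
            = 1 / (Fintype.card (Ω i.castSucc) : ℝ)) ∧
        (∀ ω : ∀ i, Ω i,
          p ω = if ∀ i : Fin N, ω i.castSucc = π i (ω (Fin.last N))
                then q (ω (Fin.last N)) else 0) := by
  have hpos : ∀ i, (0 : ℝ) < Fintype.card (Ω i) := fun i => by
    have := hcard i
    exact_mod_cast (by omega : 0 < Fintype.card (Ω i))
  have hne : ∀ i, Nonempty (Ω i) := fun i => Fintype.card_pos_iff.1 (by exact_mod_cast hpos i)
  have hsplit : multiInfo p = ∑ i : Fin N, entropy (marginal p i.castSucc)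
      + entropy (marginal p (Fin.last N)) - entropy p := by
    rw [multiInfo, Fin.sum_univ_castSucc]
  constructor
  · intro hI
    rw [hsplit] at hI
    have hle : ∀ i ∈ (univ : Finset (Fin N)), entropy (marginal p i.castSucc)
        ≤ Real.log (Fintype.card (Ω i.castSucc)) :=
      fun i _ => entropy_le_log_card (isProbDist_marginal hp _) (hpos _)
    have hsum := sum_le_sum hle
    have hlast := entropy_marginal_le hp (Fin.last N)
    have hunif : ∀ i : Fin N, ∀ x, marginal p i.castSucc x
        = 1 / (Fintype.card (Ω i.castSucc) : ℝ) := fun i =>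
      eq_uniform_of_entropy_eq (isProbDist_marginal hp _) (hpos _)
        ((sum_eq_sum_iff_of_le hle).1 (by linarith) i (mem_univ i))
    obtain ⟨s, hs, hps, hp0⟩ := exists_section hp (Fin.last N) (by linarith)
    have hmarg : ∀ (i : Fin N) (x : Ω i.castSucc),
        (∑ y, if s y i.castSucc = x then marginal p (Fin.last N) y else 0)
          = 1 / (Fintype.card (Ω i.castSucc) : ℝ) := fun i x => by
      rw [← hunif i x, marginal_section hs hp0]
      simp only [hps]
    refine ⟨marginal p (Fin.last N), fun i y => s y i.castSucc, isProbDist_marginal hp _,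
      fun i x => ?_, hmarg, fun ω => ?_⟩
    · have hx : (∑ y, if s y i.castSucc = x then marginal p (Fin.last N) y else 0) ≠ 0 := by
        rw [hmarg]
        exact (one_div_pos.2 (hpos _)).ne'
      obtain ⟨y, -, hy⟩ := exists_ne_zero_of_sum_ne_zero hx
      exact ⟨y, (ite_ne_right_iff.1 hy).1⟩
    · split_ifs with h
      · have hω : ω = s (ω (Fin.last N)) := by
          funext j
          refine Fin.lastCases ?_ (fun i => h i) j
          exact (hs _).symm
        rw [← hps, ← hω]
      · exact hp0 ω fun hω => h fun i => congrFun hω i.castSucc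
  · rintro ⟨q, π, -, -, hq, hpq⟩
    let s : Ω (Fin.last N) → ∀ j, Ω j :=
      fun y j => Fin.lastCases (motive := Ω) y (fun i => π i y) j
    have hs : ∀ y, s y (Fin.last N) = y := fun y => by simp [s]
    have hsc : ∀ y (i : Fin N), s y i.castSucc = π i y := fun y i => by simp [s]
    have hps : ∀ y, p (s y) = q y := fun y => by simp [hpq, hs, hsc]
    have hp0 : ∀ ω, ω ≠ s (ω (Fin.last N)) → p ω = 0 := fun ω hω => by
      rw [hpq, if_neg]
      intro h
      refine hω (funext fun j => Fin.lastCases ?_ (fun i => ?_) j)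
      · exact (hs _).symm
      · rw [hsc, h i]
    have hlast : marginal p (Fin.last N) = q := funext fun y => by
      simp [marginal_section hs hp0, hs, hps]
    have hent : entropy p = entropy q := by
      rw [entropy, sum_section hs fun ω hω => by simp [hp0 ω hω]]
      simp only [hps, entropy]
    have hunif : ∀ i : Fin N, entropy (marginal p i.castSucc)
        = Real.log (Fintype.card (Ω i.castSucc)) := fun i =>
      entropy_uniform (hpos _) fun x => by
        rw [marginal_section hs hp0, ← hq i x]
        simp only [hsc, hps]
    rw [hsplit, hlast, hent, sum_congr rfl fun i _ => hunif i]
    ring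
end

section
/- For integers n₁,…,n_{N−1} ≥ 2 one has n_min(n₁,…,n_{N−1}) ≤ lcm(n₁,…,n_{N−1}), with equality if and only if lcm(n₁,…,n_{N−1}) = max_{1≤i≤N−1} n_i. -/
/-!
Put `L = lcm(n₁,…,n_k)` and let `S_i` be the set of residues `x < L` with `L ∣ n_i x`, that is,
the subgroup of order `n_i` of `ℤ/L`. For a non-empty index set `A`, the intersection of the `S_i`
with `i ∈ A` is the subgroup of order `gcd{n_i : i ∈ A}` (`inter_torsion`, `card_torsion`), so
inclusion-exclusion identifies `n_min` with the cardinality of the union of the `S_i`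
(`nmin_eq_card`). This is at most `L`, and it equals `L` exactly when the union is all of `ℤ/L`.
A union of subgroups that contains the generator `1` has a member containing `1`, which means
`L ∣ n_i`, hence `n_i = L`, for some `i`; conversely `n_i = L` makes `S_i` everything.
-/

open Finset

/-- `n_min(n₁,…,n_k) = ∑_{∅≠A⊆[k]} (−1)^{|A|−1} gcd{n_i : i ∈ A}`. -/
def nmin {k : ℕ} (n : Fin k → ℕ) : ℤ :=
  ∑ A ∈ Finset.univ.powerset.filter (fun A : Finset (Fin k) => A.Nonempty),
    (-1 : ℤ) ^ (A.card - 1) * ((A.gcd n : ℕ) : ℤ)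

/-- The `g`-torsion of `ℤ/L`, as a set of representatives in `{0, …, L - 1}`. -/
def torsion (L g : ℕ) : Finset ℕ := (Finset.range L).filter (fun x => L ∣ g * x)

lemma mem_torsion {L g x : ℕ} : x ∈ torsion L g ↔ x < L ∧ L ∣ g * x := by
  simp [torsion]

lemma card_torsion {L g : ℕ} (hL : 0 < L) (hg : g ∣ L) : (torsion L g).card = g := by
  obtain ⟨m, rfl⟩ := hg
  have hg0 : 0 < g := Nat.pos_of_mul_pos_right hL
  have hm0 : 0 < m := Nat.pos_of_mul_pos_left hL
  have h : torsion (g * m) g = (Finset.range g).image (fun y => m * y) := by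
    ext x
    simp only [mem_torsion, Finset.mem_image, Finset.mem_range]
    rw [Nat.mul_dvd_mul_iff_left hg0]
    constructor
    · rintro ⟨hx, y, rfl⟩
      refine ⟨y, ?_, rfl⟩
      rw [mul_comm g m] at hx
      exact Nat.lt_of_mul_lt_mul_left hx
    · rintro ⟨y, hy, rfl⟩
      refine ⟨?_, y, rfl⟩
      rw [mul_comm g m]
      exact Nat.mul_lt_mul_of_pos_left hy hm0
  rw [h, Finset.card_image_of_injective _ (fun a b hab => Nat.eq_of_mul_eq_mul_left hm0 hab),
    Finset.card_range]

lemma inter_torsion {ι : Type*} (L : ℕ) (n : ι → ℕ) (A : Finset ι) (hA : A.Nonempty) :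
    A.inf' hA (fun i => torsion L (n i)) = torsion L (A.gcd n) := by
  ext x
  have h : A.gcd (fun i => n i * x) = A.gcd n * x := by
    rw [Finset.gcd_mul_right, normalize_eq]
  rw [Finset.mem_inf', mem_torsion, ← h, Finset.dvd_gcd_iff]
  simp only [mem_torsion]
  obtain ⟨i, hi⟩ := hA
  exact ⟨fun H => ⟨(H i hi).1, fun j hj => (H j hj).2⟩, fun H j hj => ⟨H.1, H.2 j hj⟩⟩

/-- `L` may be any positive common multiple of the `n i`. -/
lemma nmin_eq_card {k : ℕ} (n : Fin k → ℕ) {L : ℕ} (hL : 0 < L) (hn : ∀ i, n i ∣ L) :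
    nmin n = ((Finset.univ.biUnion (fun i => torsion L (n i))).card : ℤ) := by
  rw [Finset.inclusion_exclusion_card_biUnion, nmin,
    ← Finset.sum_coe_sort (Finset.univ.powerset.filter _)]
  refine Finset.sum_congr rfl fun A _ => ?_
  obtain ⟨A, hA⟩ := A
  have hA' : A.Nonempty := (Finset.mem_filter.1 hA).2
  obtain ⟨i, hi⟩ := hA'
  have hg : A.gcd n ∣ L := (Finset.gcd_dvd hi).trans (hn i)
  rw [inter_torsion, card_torsion hL hg]
  -- the library counts with the exponent `|A| + 1`, which has the parity of `|A| - 1`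
  obtain ⟨c, hc⟩ : ∃ c, A.card = c + 1 := Nat.exists_eq_add_one.2 (Finset.card_pos.2 ⟨i, hi⟩)
  simp [hc, pow_succ]


/-- For integers `n₁,…,n_k ≥ 2` (`k ≥ 1`): `n_min ≤ lcm(n₁,…,n_k)`, with equality
iff `lcm(n₁,…,n_k) = max_i n_i`. -/
theorem stmt6 {k : ℕ} (hk : 1 ≤ k) (n : Fin k → ℕ) (hn : ∀ i, 2 ≤ n i) :
    nmin n ≤ ((Finset.univ.lcm n : ℕ) : ℤ) ∧
    (nmin n = ((Finset.univ.lcm n : ℕ) : ℤ) ↔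
      Finset.univ.lcm n = Finset.univ.sup n) := by
  set L := Finset.univ.lcm n with hLdef
  have hd : ∀ i, n i ∣ L := fun i => Finset.dvd_lcm (Finset.mem_univ i)
  have hL : 0 < L := Nat.pos_of_ne_zero fun h0 => by
    obtain ⟨i, -, hi⟩ := Finset.lcm_eq_zero_iff.1 h0
    have := hn i
    omega
  have hL2 : 2 ≤ L := (hn ⟨0, hk⟩).trans (Nat.le_of_dvd hL (hd _))
  have hsub : Finset.univ.biUnion (fun i => torsion L (n i)) ⊆ Finset.range L :=
    Finset.biUnion_subset.2 fun i _ => Finset.filter_subset _ _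
  have hle := Finset.card_le_card hsub
  rw [Finset.card_range] at hle
  rw [nmin_eq_card n hL hd]
  refine ⟨by exact_mod_cast hle, ?_⟩
  rw [Nat.cast_inj]
  constructor
  · intro h
    have heq := Finset.eq_of_subset_of_card_le hsub (by rw [Finset.card_range, h])
    have h1 : 1 ∈ Finset.univ.biUnion (fun i => torsion L (n i)) := by
      rw [heq, Finset.mem_range]
      omega
    obtain ⟨i, -, hi⟩ := Finset.mem_biUnion.1 h1
    have hLi : L ∣ n i := by simpa using (mem_torsion.1 hi).2
    apply le_antisymm
    · rw [Nat.dvd_antisymm hLi (hd i)]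
      exact Finset.le_sup (f := n) (Finset.mem_univ i)
    · exact Finset.sup_le fun j _ => Nat.le_of_dvd hL (hd j)
  · intro h
    obtain ⟨i, -, hi⟩ := Finset.exists_mem_eq_sup Finset.univ ⟨⟨0, hk⟩, Finset.mem_univ _⟩ n
    have hc := Finset.card_le_card
      (Finset.subset_biUnion_of_mem (fun i => torsion L (n i)) (Finset.mem_univ i))
    rw [card_torsion hL (hd i), ← hi, ← h] at hc
    exact le_antisymm hle hc
end

section
/- The set M(Ω₁,Ω₂) of global maximizers of mutual information is the disjoint union of the sets M_π over π ∈ S: each M_π is contained in M(Ω₁,Ω₂), the sets M_π for distinct π ∈ S are pairwise disjoint, and every p ∈ M(Ω₁,Ω₂) lies in M_π for some π ∈ S. -/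
/-!
For a distribution `p` and `n = |Ω₁|` there is the identity
`ln n - I(p) = (ln n - H(p₁)) + (H(p) - H(p₂))
  = n⁻¹ ∑ₐ klFun (n p₁(a)) + ∑ₐ ∑_b p(a, b) (ln p₂(b) - ln p(a, b))`,
where `klFun x = x ln x + 1 - x` is nonnegative on `[0, ∞)` and vanishes there only at `1`.
Every term of both sums is nonnegative (`p(a, b) ≤ p₂(b)`), so `I(p) = ln n` exactly when `p₁` is
uniform and every `p(a, b)` is either `0` or all of `p₂(b)` (`mutualInfo_eq_log_card_iff`).
The second condition says that each column `b` has at most one positive entry; recording its row,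
or `none` when the column is zero, recovers the map `π` from `p`.
-/

open Finset

/-- First marginal of a distribution on `Ω₁ × Ω₂`. -/
noncomputable def marg1 {Ω₁ Ω₂ : Type*} [Fintype Ω₂] (p : Ω₁ × Ω₂ → ℝ) : Ω₁ → ℝ :=
  fun a => ∑ b, p (a, b)

/-- Second marginal of a distribution on `Ω₁ × Ω₂`. -/
noncomputable def marg2 {Ω₁ Ω₂ : Type*} [Fintype Ω₁] (p : Ω₁ × Ω₂ → ℝ) : Ω₂ → ℝ :=
  fun b => ∑ a, p (a, b)

/-- Mutual information `I(p) = H(p₁) + H(p₂) − H(p)`. -/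
noncomputable def mutualInfo {Ω₁ Ω₂ : Type*} [Fintype Ω₁] [Fintype Ω₂]
    (p : Ω₁ × Ω₂ → ℝ) : ℝ :=
  entropy (marg1 p) + entropy (marg2 p) - entropy p

/-- `M(Ω₁,Ω₂)`: the set of global maximizers of mutual information, viewed inside
`ℝ^{Ω₁×Ω₂}`. -/
noncomputable def Mset (Ω₁ Ω₂ : Type*) [Fintype Ω₁] [Fintype Ω₂] :
    Set (Ω₁ × Ω₂ → ℝ) :=
  {p | IsProbDist p ∧ mutualInfo p = Real.log (Fintype.card Ω₁)}

/-- `Ω₁* = Ω₁ ∪ {0}` is modeled by `Option Ω₁` (with `none` playing the role of `0`).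
`S` is the set of maps `π : Ω₂ → Ω₁*` with `Ω₁ ⊆ π(Ω₂)`. -/
def SPi (Ω₁ Ω₂ : Type*) : Set (Ω₂ → Option Ω₁) :=
  {π | ∀ a : Ω₁, ∃ b : Ω₂, π b = some a}

/-- The partial order on `S`: `σ ⪯ π` iff `σ⁻¹(ω₁) ⊆ π⁻¹(ω₁)` for all `ω₁ ∈ Ω₁`. -/
def sle {Ω₁ Ω₂ : Type*} (σ π : Ω₂ → Option Ω₁) : Prop :=
  ∀ (a : Ω₁) (b : Ω₂), σ b = some a → π b = some a

/-- `M_π` for `π ∈ S`. -/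
noncomputable def Mpi {Ω₁ Ω₂ : Type*} [Fintype Ω₁] [Fintype Ω₂] [DecidableEq Ω₁]
    (π : Ω₂ → Option Ω₁) : Set (Ω₁ × Ω₂ → ℝ) :=
  {p | IsProbDist p ∧
    (∀ a : Ω₁, (∑ b : Ω₂, if π b = some a then p (a, b) else 0)
        = 1 / (Fintype.card Ω₁ : ℝ)) ∧
    (∀ (a : Ω₁) (b : Ω₂), 0 < p (a, b) ↔ π b = some a)}

lemma le_marg2 {Ω₁ Ω₂ : Type*} [Fintype Ω₁] {p : Ω₁ × Ω₂ → ℝ} (hp : ∀ x, 0 ≤ p x)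
    (a : Ω₁) (b : Ω₂) : p (a, b) ≤ marg2 p b :=
  Finset.single_le_sum (f := fun a => p (a, b)) (fun i _ => hp (i, b)) (Finset.mem_univ a)

/-- A column whose total mass sits in one entry is zero elsewhere. -/
lemma eq_of_marg2_eq {Ω₁ Ω₂ : Type*} [Fintype Ω₁] {p : Ω₁ × Ω₂ → ℝ} (hp : ∀ x, 0 ≤ p x)
    {a a' : Ω₁} {b : Ω₂} (h : p (a, b) = marg2 p b) (h' : 0 < p (a', b)) : a' = a := by
  classical
  by_contra hne
  have := Finset.add_le_sum (f := fun a => p (a, b)) (s := Finset.univ)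
    (fun i _ => hp (i, b)) (Finset.mem_univ a) (Finset.mem_univ a') (Ne.symm hne)
  simp only [marg2] at h
  linarith

/-- Chain rule for entropy: `H(p) - H(p₂)` is the conditional entropy given the second
coordinate. -/
lemma entropy_sub_entropy_marg2 {Ω₁ Ω₂ : Type*} [Fintype Ω₁] [Fintype Ω₂]
    (p : Ω₁ × Ω₂ → ℝ) :
    entropy p - entropy (marg2 p)
      = ∑ x : Ω₁ × Ω₂, p x * (Real.log (marg2 p x.2) - Real.log (p x)) := by
  have h : ∑ x : Ω₁ × Ω₂, p x * Real.log (marg2 p x.2)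
      = ∑ b, marg2 p b * Real.log (marg2 p b) := by
    rw [Fintype.sum_prod_type_right]
    exact Finset.sum_congr rfl fun b _ =>
      (Finset.sum_mul Finset.univ (fun a => p (a, b)) (Real.log (marg2 p b))).symm
  simp only [mul_sub, Finset.sum_sub_distrib, h, entropy]
  ring

/-- The entropy deficit `ln n - H(q)` is the divergence of `q` from the uniform distribution. -/
lemma log_card_sub_entropy {α : Type*} [Fintype α] (hn : 0 < Fintype.card α) {q : α → ℝ}
    (hq : ∑ a, q a = 1) :
    Real.log (Fintype.card α) - entropy q
      = (Fintype.card α : ℝ)⁻¹ * ∑ a, InformationTheory.klFun (Fintype.card α * q a) := by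
  have hn' : (Fintype.card α : ℝ) ≠ 0 := by positivity
  have h : ∀ a, InformationTheory.klFun (Fintype.card α * q a)
      = Fintype.card α * (q a * Real.log (Fintype.card α)) +
        Fintype.card α * (q a * Real.log (q a)) + 1 - Fintype.card α * q a := by
    intro a
    -- at `q a = 0` both sides equal `1`, although `log` is not additive there
    rcases eq_or_ne (q a) 0 with h0 | h0
    · simp [h0, InformationTheory.klFun]
    · rw [InformationTheory.klFun, Real.log_mul hn' h0]
      ring
  simp only [h, Finset.sum_sub_distrib, Finset.sum_add_distrib, ← Finset.mul_sum,
    ← Finset.sum_mul, hq, entropy, Finset.sum_const, Finset.card_univ, nsmul_eq_mul]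
  field_simp
  ring

/-- The equality case of `I(p) ≤ ln n₁`. -/
lemma mutualInfo_eq_log_card_iff {Ω₁ Ω₂ : Type*} [Fintype Ω₁] [Fintype Ω₂]
    (hn : 0 < Fintype.card Ω₁) {p : Ω₁ × Ω₂ → ℝ} (hp : IsProbDist p) :
    mutualInfo p = Real.log (Fintype.card Ω₁) ↔
      (∀ a, marg1 p a = 1 / (Fintype.card Ω₁ : ℝ)) ∧
        ∀ a b, 0 < p (a, b) → p (a, b) = marg2 p b := by
  obtain ⟨hp0, hp1⟩ := hp
  have hn' : (0 : ℝ) < Fintype.card Ω₁ := by exact_mod_cast hn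
  have hm1 : ∑ a, marg1 p a = 1 := by
    rw [← hp1, Fintype.sum_prod_type]; rfl
  have hm0 : ∀ a, 0 ≤ (Fintype.card Ω₁ : ℝ) * marg1 p a := fun a =>
    mul_nonneg hn'.le (Finset.sum_nonneg fun b _ => hp0 (a, b))
  have hk0 : ∀ a ∈ Finset.univ, 0 ≤ InformationTheory.klFun (Fintype.card Ω₁ * marg1 p a) :=
    fun a _ => InformationTheory.klFun_nonneg (hm0 a)
  have hc0 : ∀ x ∈ (Finset.univ : Finset (Ω₁ × Ω₂)),
      0 ≤ p x * (Real.log (marg2 p x.2) - Real.log (p x)) := by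
    rintro ⟨a, b⟩ -
    rcases (hp0 (a, b)).eq_or_lt with h | h
    · simp [← h]
    · exact mul_nonneg h.le (sub_nonneg.2 (Real.log_le_log h (le_marg2 hp0 a b)))
  have hsplit : mutualInfo p = Real.log (Fintype.card Ω₁) ↔
      (Fintype.card Ω₁ : ℝ)⁻¹ * ∑ a, InformationTheory.klFun (Fintype.card Ω₁ * marg1 p a)
        + ∑ x : Ω₁ × Ω₂, p x * (Real.log (marg2 p x.2) - Real.log (p x)) = 0 := by
    rw [← log_card_sub_entropy hn hm1, ← entropy_sub_entropy_marg2, mutualInfo]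
    constructor <;> intro h <;> linarith
  rw [hsplit, add_eq_zero_iff_of_nonneg
    (mul_nonneg (inv_nonneg.2 hn'.le) (Finset.sum_nonneg hk0)) (Finset.sum_nonneg hc0),
    mul_eq_zero_iff_left (inv_ne_zero hn'.ne'), Finset.sum_eq_zero_iff_of_nonneg hk0,
    Finset.sum_eq_zero_iff_of_nonneg hc0]
  refine and_congr (forall_congr' fun a => ?_) ?_
  · rw [InformationTheory.klFun_eq_zero_iff (hm0 a), eq_div_iff hn'.ne', mul_comm]
    simp
  · simp only [Finset.mem_univ, true_implies, Prod.forall]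
    refine forall_congr' fun a => forall_congr' fun b => ?_
    constructor
    · intro h hpos
      have hl := (mul_eq_zero.1 h).resolve_left hpos.ne'
      exact Real.log_injOn_pos hpos (hpos.trans_le (le_marg2 hp0 a b)) (sub_eq_zero.1 hl).symm
    · intro h
      rcases (hp0 (a, b)).eq_or_lt with h0 | h0
      · simp [← h0]
      · simp [← h h0]

/-- `M(Ω₁,Ω₂)` is the disjoint union of the sets `M_π`, `π ∈ S`: each `M_π` lies in
`M(Ω₁,Ω₂)`, distinct `π` give disjoint `M_π`, and every maximizer lies in some `M_π`. -/
theorem stmt9 {Ω₁ Ω₂ : Type*} [Fintype Ω₁] [Fintype Ω₂] [DecidableEq Ω₁]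
    (h1 : 2 ≤ Fintype.card Ω₁) (h12 : Fintype.card Ω₁ ≤ Fintype.card Ω₂) :
    (∀ π ∈ SPi Ω₁ Ω₂, Mpi π ⊆ Mset Ω₁ Ω₂) ∧
    (∀ π ∈ SPi Ω₁ Ω₂, ∀ σ ∈ SPi Ω₁ Ω₂, π ≠ σ → Disjoint (Mpi (Ω₁ := Ω₁) π) (Mpi σ)) ∧
    (∀ p ∈ Mset Ω₁ Ω₂, ∃ π ∈ SPi Ω₁ Ω₂, p ∈ Mpi π) := by
  have hn : 0 < Fintype.card Ω₁ := by omega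
  -- the positivity pattern of `p ∈ Mpi π` makes the restricted row sums full marginals
  have hrow : ∀ (p : Ω₁ × Ω₂ → ℝ) (π : Ω₂ → Option Ω₁), (∀ x, 0 ≤ p x) →
      (∀ a b, 0 < p (a, b) ↔ π b = some a) →
      ∀ a, (∑ b : Ω₂, if π b = some a then p (a, b) else 0) = marg1 p a := by
    intro p π hp0 hπ a
    refine Finset.sum_congr rfl fun b _ => ?_
    split_ifs with h
    · rfl
    · exact le_antisymm (hp0 _) (not_lt.1 fun hlt => h ((hπ a b).1 hlt))
  refine ⟨?_, ?_, ?_⟩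
  · rintro π - p ⟨hp, hsum, hpos⟩
    refine ⟨hp, (mutualInfo_eq_log_card_iff hn hp).2 ⟨fun a => ?_, fun a b hab => ?_⟩⟩
    · rw [← hrow p π hp.1 hpos a, hsum a]
    · refine (Finset.sum_eq_single (f := fun a => p (a, b)) a (fun a' _ hne => ?_)
        (fun h => absurd (Finset.mem_univ a) h)).symm
      refine le_antisymm (not_lt.1 fun hlt => hne ?_) (hp.1 _)
      exact Option.some.inj (((hpos a' b).1 hlt).symm.trans ((hpos a b).1 hab))
  · intro π _ σ _ hne
    rw [Set.disjoint_left]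
    rintro p ⟨-, -, hπ⟩ ⟨-, -, hσ⟩
    exact hne (funext fun b => Option.ext fun a => (hπ a b).symm.trans (hσ a b))
  · rintro p ⟨hp, hI⟩
    obtain ⟨hm, hcol⟩ := (mutualInfo_eq_log_card_iff hn hp).1 hI
    have hex : ∀ b, ∃ o : Option Ω₁, ∀ a, 0 < p (a, b) ↔ o = some a := by
      intro b
      by_cases h : ∃ a, 0 < p (a, b)
      · obtain ⟨a, ha⟩ := h
        refine ⟨some a, fun a' => ⟨fun h' => ?_, fun h' => ?_⟩⟩
        · rw [eq_of_marg2_eq hp.1 (hcol a b ha) h']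
        · rwa [← Option.some.inj h']
      · exact ⟨none, fun a => ⟨fun h' => absurd ⟨a, h'⟩ h, fun h' => by simp at h'⟩⟩
    choose π hπ using hex
    have hpos : ∀ a b, 0 < p (a, b) ↔ π b = some a := fun a b => hπ b a
    refine ⟨π, fun a => ?_, hp, fun a => ?_, hpos⟩
    · have hlt : 0 < ∑ b, p (a, b) := by
        change 0 < marg1 p a
        rw [hm a]
        positivity
      obtain ⟨b, -, hb⟩ := (Finset.sum_pos_iff_of_nonneg fun b _ => hp.1 (a, b)).1 hlt
      exact ⟨b, (hpos a b).1 hb⟩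
    · rw [hrow p π hp.1 hpos a, hm a]
end

section
/- For σ, π ∈ S, the inclusion M_σ ⊆ closure(M_π) (closure taken in ℝ^{Ω₁×Ω₂}) holds if and only if σ ⪯ π. -/
/-!
Every element of `Mpi σ` is positive exactly on the graph of `σ`. Positivity of a coordinate is an
open condition, so if `p ∈ Mpi σ` is a limit of elements of `Mpi π`, the graph of `σ` is contained
in that of `π`; as `Mpi σ` is nonempty for `σ ∈ S` (`Mpi_nonempty`), this gives `σ ⪯ π`.

Conversely, if `σ ⪯ π`, then for `p ∈ Mpi σ` and `q ∈ Mpi π` each strict convex combination of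
`p` and `q` has first marginal uniform and support the graph of `π`, so the open segment from `p`
to `q` lies in `Mpi π` (`openSegment_subset_Mpi`), and `p` is in the closure of this segment.
-/

open Finset

/-- Since an element of `Mpi π` vanishes off the graph of `π`, the condition on its partial sums
just says that the first marginal is uniform; the total mass is then automatically `1`. -/
lemma mem_Mpi_iff {Ω₁ Ω₂ : Type*} [Fintype Ω₁] [Fintype Ω₂] [DecidableEq Ω₁] [Nonempty Ω₁]
    {π : Ω₂ → Option Ω₁} {p : Ω₁ × Ω₂ → ℝ} :
    p ∈ Mpi π ↔ (∀ x, 0 ≤ p x) ∧ (∀ a, ∑ b, p (a, b) = 1 / (Fintype.card Ω₁ : ℝ)) ∧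
      ∀ a b, 0 < p (a, b) ↔ π b = some a := by
  have key : (∀ x, 0 ≤ p x) → (∀ a b, 0 < p (a, b) ↔ π b = some a) → ∀ a,
      (∑ b, if π b = some a then p (a, b) else 0) = ∑ b, p (a, b) := by
    intro h0 hs a
    refine Finset.sum_congr rfl fun b _ => ?_
    split_ifs with h
    · rfl
    · exact le_antisymm (h0 _) (not_lt.1 (mt (hs a b).1 h))
  constructor
  · rintro ⟨⟨h0, -⟩, hm, hs⟩
    exact ⟨h0, fun a => (key h0 hs a).symm.trans (hm a), hs⟩
  · rintro ⟨h0, hm, hs⟩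
    refine ⟨⟨h0, ?_⟩, fun a => (key h0 hs a).trans (hm a), hs⟩
    rw [Fintype.sum_prod_type]
    simp [hm]

/-- The witness puts the uniform distribution of mass `1 / |Ω₁|` on each fibre of `π`. -/
lemma Mpi_nonempty {Ω₁ Ω₂ : Type*} [Fintype Ω₁] [Fintype Ω₂] [DecidableEq Ω₁] [Nonempty Ω₁]
    {π : Ω₂ → Option Ω₁} (hπ : π ∈ SPi Ω₁ Ω₂) : (Mpi π).Nonempty := by
  have hN : (0 : ℝ) < Fintype.card Ω₁ := by exact_mod_cast Fintype.card_pos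
  have hc : ∀ a : Ω₁, (0 : ℝ) < #{b | π b = some a} := by
    intro a
    obtain ⟨b, hb⟩ := hπ a
    exact_mod_cast Finset.card_pos.2 ⟨b, by simpa using hb⟩
  refine ⟨fun x => if π x.2 = some x.1 then
    1 / (Fintype.card Ω₁ : ℝ) / #{b | π b = some x.1} else 0, mem_Mpi_iff.2 ⟨?_, ?_, ?_⟩⟩
  · intro x
    split_ifs <;> positivity
  · intro a
    change ∑ b, (if π b = some a then
      1 / (Fintype.card Ω₁ : ℝ) / #{b | π b = some a} else 0) = _
    rw [← Finset.sum_filter, Finset.sum_const, nsmul_eq_mul]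
    exact mul_div_cancel₀ _ (hc a).ne'
  · intro a b
    have := hc a
    dsimp only
    split_ifs with h
    · exact iff_of_true (by positivity) h
    · exact iff_of_false (lt_irrefl _) h

lemma openSegment_subset_Mpi {Ω₁ Ω₂ : Type*} [Fintype Ω₁] [Fintype Ω₂] [DecidableEq Ω₁]
    [Nonempty Ω₁] {σ π : Ω₂ → Option Ω₁} (h : sle σ π) {p q : Ω₁ × Ω₂ → ℝ}
    (hp : p ∈ Mpi σ) (hq : q ∈ Mpi π) : openSegment ℝ p q ⊆ Mpi π := by
  rintro _ ⟨s, t, hs, ht, hst, rfl⟩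
  obtain ⟨p0, pm, ps⟩ := mem_Mpi_iff.1 hp
  obtain ⟨q0, qm, qs⟩ := mem_Mpi_iff.1 hq
  refine mem_Mpi_iff.2 ⟨fun x => ?_, fun a => ?_, fun a b => ?_⟩
  · have := p0 x
    have := q0 x
    simp only [Pi.add_apply, Pi.smul_apply, smul_eq_mul]
    positivity
  · simp only [Pi.add_apply, Pi.smul_apply, smul_eq_mul, Finset.sum_add_distrib,
      ← Finset.mul_sum, pm, qm, ← add_mul, hst, one_mul]
  · simp only [Pi.add_apply, Pi.smul_apply, smul_eq_mul]
    constructor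
    · intro hpos
      by_contra hn
      have hp0 : p (a, b) ≤ 0 := not_lt.1 fun h' => hn (h a b ((ps a b).1 h'))
      have hq0 : q (a, b) ≤ 0 := not_lt.1 fun h' => hn ((qs a b).1 h')
      nlinarith
    · intro hb
      have := p0 (a, b)
      have := (qs a b).2 hb
      positivity

/-- For `σ, π ∈ S`: `M_σ ⊆ closure(M_π)` (closure in `ℝ^{Ω₁×Ω₂}`) iff `σ ⪯ π`. -/
theorem stmt12 {Ω₁ Ω₂ : Type*} [Fintype Ω₁] [Fintype Ω₂] [DecidableEq Ω₁]
    (h1 : 2 ≤ Fintype.card Ω₁) (h12 : Fintype.card Ω₁ ≤ Fintype.card Ω₂)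
    (σ π : Ω₂ → Option Ω₁) (hσ : σ ∈ SPi Ω₁ Ω₂) (hπ : π ∈ SPi Ω₁ Ω₂) :
    Mpi σ ⊆ closure (Mpi π) ↔ sle σ π := by
  have : Nonempty Ω₁ := Fintype.card_pos_iff.1 (by omega)
  constructor
  · intro hsub a b hab
    obtain ⟨p, hp⟩ := Mpi_nonempty hσ
    have hopen : IsOpen {q : Ω₁ × Ω₂ → ℝ | 0 < q (a, b)} :=
      isOpen_lt continuous_const (continuous_apply _)
    obtain ⟨q, hqpos, hq⟩ := mem_closure_iff.1 (hsub hp) _ hopen ((hp.2.2 a b).2 hab)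
    exact (hq.2.2 a b).1 hqpos
  · intro h p hp
    obtain ⟨q, hq⟩ := Mpi_nonempty hπ
    refine closure_mono (openSegment_subset_Mpi h hp hq) ?_
    rw [closure_openSegment]
    exact left_mem_segment ℝ p q
end

section
/- There exists a linear subspace T ⊆ ℝ^Ω with dim T ≤ 3·∑_{i=1}^{N}(n_i − 1) + 3 such that every local maximizer of the multi-information I lies in the closure of the exponential family exp(T) in ℝ^Ω; in particular, if all n_i = 2 one can take dim T ≤ 3N + 3. -/
/-!
The argument has two halves. Write `d = ∑ i, (n_i - 1)`.

**Small supports.** Along a direction `v` with vanishing marginals, `I` equals a constant minus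
the strictly concave function `H`, so a local maximizer `p` cannot lie in the interior of a segment
`p + t v` of probability distributions. The marginals of `v` are determined by the total mass and
the values of the `i`-th marginal off one chosen point of each `Ω i`, which makes `d + 1` linear
conditions; a support with more than `d + 1` points would leave room for such a `v ≠ 0`
(`exists_direction`, `no_local_max`). Hence `|supp p| ≤ d + 1` (`support_card_le`).

**One family for all small supports.** Embed the finite set `Ω` in `ℝ` by an injection `x`, and
let `T` be the space of functions `P ∘ x` with `P` a polynomial of degree at most `2 s`. If `p` has
support `S` with `|S| ≤ s`, let `R` interpolate `log p` on `S` and put `Q = ∏_{a ∈ S} (X - x a)²`.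
Since `Q ∘ x` vanishes on `S` and is positive elsewhere, `exp((R - t Q) ∘ x) → p` as `t → ∞`
(`mem_closure_polySpace`). With `s = d + 1` this gives `dim T ≤ 2 d + 3 ≤ 3 d + 3`.
-/

open Finset

/-- The Gibbs measure `exp(X)(ω) = e^{X(ω)} / ∑_{ω'} e^{X(ω')}`. -/
noncomputable def gibbs {α : Type*} [Fintype α] (X : α → ℝ) : α → ℝ :=
  fun a => Real.exp (X a) / ∑ b, Real.exp (X b)

/-- The space of functions `P ∘ x` with `P` a real polynomial of degree less than `n`. -/
noncomputable def polySpace {α : Type*} (x : α → ℝ) (n : ℕ) : Submodule ℝ (α → ℝ) :=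
  (Polynomial.degreeLT ℝ n).map (LinearMap.pi fun a => Polynomial.leval (x a))

lemma finrank_polySpace_le {α : Type*} (x : α → ℝ) (n : ℕ) :
    Module.finrank ℝ (polySpace x n) ≤ n := by
  have e := Polynomial.degreeLTEquiv ℝ n
  have : FiniteDimensional ℝ (Polynomial.degreeLT ℝ n) :=
    Module.Finite.equiv e.symm
  refine (Submodule.finrank_map_le _ _).trans ?_
  rw [e.finrank_eq]
  simp

/-- If `Y` vanishes on the support of `p` and is positive elsewhere, while `X = log p` on the
support, then the Gibbs measures of `X - t Y` converge to `p`. -/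
lemma tendsto_gibbs {α : Type*} [Fintype α] {p X Y : α → ℝ} (hp : IsProbDist p)
    (hX : ∀ a, p a ≠ 0 → X a = Real.log (p a)) (hY0 : ∀ a, p a ≠ 0 → Y a = 0)
    (hY : ∀ a, p a = 0 → 0 < Y a) :
    Filter.Tendsto (fun t : ℝ => gibbs (fun a => X a - t * Y a)) Filter.atTop (nhds p) := by
  have h1 : ∀ a, Filter.Tendsto (fun t : ℝ => Real.exp (X a - t * Y a)) Filter.atTop
      (nhds (p a)) := by
    intro a
    by_cases ha : p a = 0
    · rw [ha]
      refine Real.tendsto_exp_atBot.comp ?_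
      have := (Filter.tendsto_id (α := ℝ) (x := Filter.atTop)).atTop_mul_const (hY a ha)
      simpa [sub_eq_add_neg] using
        Filter.tendsto_atBot_add_const_left _ (X a) (Filter.tendsto_neg_atTop_atBot.comp this)
    · have hpos : 0 < p a := lt_of_le_of_ne (hp.1 a) (Ne.symm ha)
      simp [hX a ha, hY0 a ha, Real.exp_log hpos]
  have h2 := tendsto_finsetSum (Finset.univ : Finset α) fun a _ => h1 a
  rw [hp.2] at h2
  rw [tendsto_pi_nhds]
  intro a
  have h3 := (h1 a).div h2 one_ne_zero
  rw [div_one] at h3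
  exact h3

lemma mem_closure_polySpace {α : Type*} [Fintype α] {x : α → ℝ}
    (hx : Function.Injective x) {p : α → ℝ} (hp : IsProbDist p) {s : ℕ}
    (hs : #{a | p a ≠ 0} ≤ s) :
    p ∈ closure (gibbs '' (polySpace x (2 * s + 1) : Set (α → ℝ))) := by
  classical
  set S : Finset α := {a | p a ≠ 0} with hS
  have hmem : ∀ a, a ∈ S ↔ p a ≠ 0 := by simp [hS]
  let R : Polynomial ℝ := Lagrange.interpolate S x (fun a => Real.log (p a))
  let Q : Polynomial ℝ := ∏ a ∈ S, (Polynomial.X - Polynomial.C (x a)) ^ 2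
  have hRdeg : R ∈ Polynomial.degreeLT ℝ (2 * s + 1) := by
    rw [Polynomial.mem_degreeLT]
    refine (Lagrange.degree_interpolate_lt _ hx.injOn).trans_le ?_
    exact_mod_cast (by omega : #S ≤ 2 * s + 1)
  have hQdeg : Q ∈ Polynomial.degreeLT ℝ (2 * s + 1) := by
    rw [Polynomial.mem_degreeLT]
    have : Q.degree = ((2 * #S : ℕ) : WithBot ℕ) := by
      simp [Q, Polynomial.degree_prod, mul_comm]
    rw [this]
    exact_mod_cast (by omega : 2 * #S < 2 * s + 1)
  have hlim := tendsto_gibbs (p := p) (X := fun a => R.eval (x a)) (Y := fun a => Q.eval (x a)) hp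
    (fun a ha => Lagrange.eval_interpolate_at_node _ hx.injOn ((hmem a).2 ha))
    (fun a ha => by
      simp only [Q, Polynomial.eval_prod]
      exact Finset.prod_eq_zero ((hmem a).2 ha) (by simp))
    (fun a ha => by
      simp only [Q, Polynomial.eval_prod]
      refine Finset.prod_pos fun b hb => ?_
      have hne : x a ≠ x b := fun h => (hmem b).1 hb (hx h ▸ ha)
      simpa using sq_pos_of_ne_zero (sub_ne_zero.2 hne))
  refine mem_closure_of_tendsto hlim (Filter.Eventually.of_forall fun t => ?_)
  refine ⟨_, ?_, rfl⟩
  refine ⟨R - t • Q, Submodule.sub_mem _ hRdeg (Submodule.smul_mem _ t hQdeg), ?_⟩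
  ext a
  simp [Polynomial.leval]

/-- Fewer linear conditions than points in the support of `p` leave a nonzero solution that is
supported there. -/
lemma exists_direction {α κ : Type*} [Fintype α] [Fintype κ] (p : α → ℝ) (c : κ → α → ℝ)
    (h : Fintype.card κ < #{a | p a ≠ 0}) :
    ∃ v : α → ℝ, v ≠ 0 ∧ (∀ a, p a = 0 → v a = 0) ∧ ∀ k, ∑ a, c k a * v a = 0 := by
  classical
  let L : (α → ℝ) →ₗ[ℝ] ({a // p a = 0} ⊕ κ → ℝ) := LinearMap.pi fun j =>
    Sum.elim (fun a => LinearMap.proj a.1) (fun k => ∑ a, c k a • LinearMap.proj a) j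
  have hlt : Module.finrank ℝ ({a // p a = 0} ⊕ κ → ℝ) < Module.finrank ℝ (α → ℝ) := by
    have h1 := Finset.card_filter_add_card_filter_not (s := (Finset.univ : Finset α))
      (fun a => p a = 0)
    rw [Module.finrank_fintype_fun_eq_card, Module.finrank_fintype_fun_eq_card,
      Fintype.card_sum, Fintype.card_subtype]
    rw [Finset.card_univ] at h1
    simp only [ne_eq] at h
    omega
  obtain ⟨v, hv, hv0⟩ := (Submodule.ne_bot_iff _).1 (LinearMap.ker_ne_bot_of_finrank_lt (f := L) hlt)
  rw [LinearMap.mem_ker] at hv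
  refine ⟨v, hv0, fun a ha => ?_, fun k => ?_⟩
  · simpa [L] using congrFun hv (Sum.inl ⟨a, ha⟩)
  · simpa [L] using congrFun hv (Sum.inr k)

lemma entropy_midpoint_lt {α : Type*} [Fintype α] {p v : α → ℝ} (hv : v ≠ 0)
    (h1 : ∀ a, 0 ≤ p a + v a) (h2 : ∀ a, 0 ≤ p a - v a) :
    entropy (fun a => p a + v a) + entropy (fun a => p a - v a) < 2 * entropy p := by
  have key : ∀ a, v a ≠ 0 → Real.negMulLog (p a + v a) + Real.negMulLog (p a - v a)
      < 2 * Real.negMulLog (p a) := by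
    intro a ha
    have := Real.strictConcaveOn_negMulLog.2 (h1 a) (h2 a)
      (fun h => ha (by linarith)) (one_half_pos (α := ℝ)) one_half_pos (add_halves 1)
    simp only [smul_eq_mul] at this
    rw [show 1 / 2 * (p a + v a) + 1 / 2 * (p a - v a) = p a by ring] at this
    linarith
  have he : ∀ q : α → ℝ, entropy q = ∑ a, Real.negMulLog (q a) := by
    intro q
    simp [entropy, Real.negMulLog]
  rw [he, he, he, ← Finset.sum_add_distrib, Finset.mul_sum]
  obtain ⟨a, ha⟩ := Function.ne_iff.1 hv
  refine Finset.sum_lt_sum (fun b _ => ?_) ⟨a, Finset.mem_univ _, key a ha⟩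
  by_cases hb : v b = 0
  · simp [hb, two_mul]
  · exact (key b hb).le

section

variable {N : ℕ} {Ω : Fin N → Type*} [∀ i, Fintype (Ω i)] [∀ i, DecidableEq (Ω i)]

lemma marginal_add_smul {p v : (∀ i, Ω i) → ℝ} (hv : ∀ i x, marginal v i x = 0) (t : ℝ)
    (i : Fin N) : marginal (fun ω => p ω + t * v ω) i = marginal p i := by
  ext x
  have h : marginal (fun ω => p ω + t * v ω) i x = marginal p i x + t * marginal v i x := by
    simp only [marginal, Finset.mul_sum, ← Finset.sum_add_distrib]
    refine Finset.sum_congr rfl fun ω _ => ?_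
    split_ifs <;> simp
  rw [h, hv, mul_zero, add_zero]

/-- A local maximizer admits no nonzero direction with vanishing marginals inside its support:
`I` is strictly convex along that direction. -/
lemma no_local_max {p v : (∀ i, Ω i) → ℝ} (hp : IsProbDist p) (hv0 : v ≠ 0)
    (hsupp : ∀ ω, p ω = 0 → v ω = 0) (hsum : ∑ ω, v ω = 0)
    (hmarg : ∀ i x, marginal v i x = 0) {ε : ℝ} (hε : 0 < ε)
    (hmax : ∀ q : (∀ i, Ω i) → ℝ, IsProbDist q → ‖q - p‖ < ε → multiInfo q ≤ multiInfo p) :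
    False := by
  -- every sufficiently small `t` works, since each condition is open at `t = 0` or trivial
  have hnn : ∀ᶠ t : ℝ in nhds 0, ∀ ω, 0 ≤ p ω + t * v ω := by
    rw [Filter.eventually_all]
    intro ω
    by_cases h : p ω = 0
    · simp [h, hsupp ω h]
    · have hpos : 0 < p ω := lt_of_le_of_ne (hp.1 ω) (Ne.symm h)
      have hc : Continuous fun t : ℝ => p ω + t * v ω := by fun_prop
      have := hc.tendsto 0
      simp only [zero_mul, add_zero] at this
      exact (this.eventually (lt_mem_nhds hpos)).mono fun t ht => ht.le
  have hnorm : ∀ᶠ t : ℝ in nhds 0, ‖(fun ω => p ω + t * v ω) - p‖ < ε := by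
    have hc : Continuous fun t : ℝ => ‖(fun ω => p ω + t * v ω) - p‖ := by fun_prop
    have := hc.tendsto 0
    have h0 : ‖(fun ω => p ω + (0 : ℝ) * v ω) - p‖ = 0 := by
      rw [norm_eq_zero]; ext; simp
    rw [h0] at this
    exact this.eventually (gt_mem_nhds hε)
  have hgood : ∀ᶠ t : ℝ in nhds 0, entropy p ≤ entropy (fun ω => p ω + t * v ω) := by
    filter_upwards [hnn, hnorm] with t h1 h2
    have := hmax _ ⟨h1, by rw [Finset.sum_add_distrib, ← Finset.mul_sum, hsum, hp.2]; simp⟩ h2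
    simp only [multiInfo, marginal_add_smul hmarg] at this
    linarith
  have hneg : Filter.Tendsto (fun t : ℝ => -t) (nhds 0) (nhds 0) := by
    simpa using (continuous_neg (G := ℝ)).tendsto 0
  obtain ⟨t, ⟨⟨⟨h1, h2⟩, h3⟩, h4⟩, ht⟩ :=
    (((((hnn.and (hneg.eventually hnn)).and hgood).and (hneg.eventually hgood)).filter_mono
      nhdsWithin_le_nhds).and (self_mem_nhdsWithin (s := Set.Ioi (0 : ℝ)))).exists
  have ht0 : t ≠ 0 := (Set.mem_Ioi.1 ht).ne'
  simp only [neg_mul, ← sub_eq_add_neg] at h2 h4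
  have := entropy_midpoint_lt (p := p) (v := fun ω => t * v ω)
    (by
      obtain ⟨ω, hω⟩ := Function.ne_iff.1 hv0
      exact Function.ne_iff.2 ⟨ω, mul_ne_zero ht0 hω⟩) h1 h2
  linarith

lemma sum_marginal (v : (∀ i, Ω i) → ℝ) (i : Fin N) : ∑ x, marginal v i x = ∑ ω, v ω := by
  simp only [marginal]
  rw [Finset.sum_comm]
  simp

/-- The support of a local maximizer has at most `∑ (n_i - 1) + 1` points. -/
lemma support_card_le [∀ i, Nonempty (Ω i)] {p : (∀ i, Ω i) → ℝ} (hp : IsProbDist p)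
    {ε : ℝ} (hε : 0 < ε)
    (hmax : ∀ q : (∀ i, Ω i) → ℝ, IsProbDist q → ‖q - p‖ < ε → multiInfo q ≤ multiInfo p) :
    #{ω | p ω ≠ 0} ≤ (∑ i : Fin N, (Fintype.card (Ω i) - 1)) + 1 := by
  classical
  by_contra! hlt
  let x₀ : ∀ i, Ω i := fun i => Classical.arbitrary _
  -- `none` is the total mass, `some ⟨i, x⟩` the value of the `i`-th marginal at `x ≠ x₀ i`
  let c : Option (Σ i, {x : Ω i // x ≠ x₀ i}) → (∀ i, Ω i) → ℝ := fun k ω =>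
    k.elim 1 fun j => if ω j.1 = j.2.1 then 1 else 0
  obtain ⟨v, hv0, hsupp, hv⟩ := exists_direction p c (by
    simpa [Fintype.card_option, Fintype.card_sigma, Fintype.card_subtype_compl] using hlt)
  have hsum : ∑ ω, v ω = 0 := by simpa [c] using hv none
  have hne : ∀ i x, x ≠ x₀ i → marginal v i x = 0 := fun i x hx => by
    simpa [c, marginal] using hv (some ⟨i, x, hx⟩)
  refine no_local_max hp hv0 hsupp hsum (fun i x => ?_) hε hmax
  by_cases hx : x = x₀ i
  · have h := sum_marginal v i
    rw [hsum, Finset.sum_eq_single x (fun y _ hy => hne i y (hx ▸ hy)) (by simp)] at h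
    exact h
  · exact hne i x hx

end

/-- There is a linear subspace `T ⊆ ℝ^Ω` with `dim T ≤ 3·∑_i(n_i − 1) + 3` such that
every local maximizer of the multi-information lies in the closure of the exponential
family `exp(T)` in `ℝ^Ω` (in particular, if all `n_i = 2` the bound is `3N + 3`). -/
theorem stmt18 {N : ℕ} (hN : 2 ≤ N) (Ω : Fin N → Type*) [∀ i, Fintype (Ω i)]
    [∀ i, DecidableEq (Ω i)]
    (hcard : ∀ i, 2 ≤ Fintype.card (Ω i))
    (hmono : ∀ i j : Fin N, i ≤ j → Fintype.card (Ω i) ≤ Fintype.card (Ω j)) :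
    ∃ T : Submodule ℝ ((∀ i, Ω i) → ℝ),
      Module.finrank ℝ T ≤ 3 * (∑ i : Fin N, (Fintype.card (Ω i) - 1)) + 3 ∧
      ((∀ i, Fintype.card (Ω i) = 2) → Module.finrank ℝ T ≤ 3 * N + 3) ∧
      ∀ p : (∀ i, Ω i) → ℝ, IsProbDist p →
        (∃ ε > (0 : ℝ), ∀ q : (∀ i, Ω i) → ℝ, IsProbDist q →
          ‖q - p‖ < ε → multiInfo q ≤ multiInfo p) →
        p ∈ closure (gibbs '' (T : Set ((∀ i, Ω i) → ℝ))) := by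
  classical
  have : ∀ i, Nonempty (Ω i) := fun i =>
    Fintype.card_pos_iff.1 (lt_of_lt_of_le (by norm_num) (hcard i))
  let x : (∀ i, Ω i) → ℝ := fun ω => ((Fintype.equivFin (∀ i, Ω i) ω : ℕ) : ℝ)
  have hx : Function.Injective x := fun a b h =>
    (Fintype.equivFin (∀ i, Ω i)).injective (Fin.ext (Nat.cast_injective h))
  have hdim := finrank_polySpace_le x (2 * ((∑ i : Fin N, (Fintype.card (Ω i) - 1)) + 1) + 1)
  refine ⟨polySpace x (2 * ((∑ i : Fin N, (Fintype.card (Ω i) - 1)) + 1) + 1), ?_, ?_, ?_⟩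
  · omega
  · intro h2
    have hN' : ∑ i : Fin N, (Fintype.card (Ω i) - 1) = N := by simp [h2]
    omega
  · rintro p hp ⟨ε, hε, hmax⟩
    exact mem_closure_polySpace hx hp (support_card_le hp hε hmax)
end
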